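/- arXiv:2510.23903 — 5 statements merged into one kernel-verified Lean document; each statement's English description precedes it below -/
import Mathlib

section
/- Let σ = (r_1,...,r_k) be a composition of a positive integer n with partial sums s_i, and let m ≥ 1. The number of points (a_1,...,a_n) ∈ ℕ^n with a_1 + ... + a_{s_i} ≤ m·s_i for all i ∈ {1,...,k} equals the number of tuples (b_1, b_2, ..., b_{mn}) ∈ ℕ^{mn} satisfying b_1 + b_2 + ... + b_{mn} ≤ n and b_{s_i·m+1} + b_{s_i·m+2} + ... + b_{mn} ≤ n − s_i for every i ∈ {1,...,k−1}. -/
open Finset Polynomial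

/-- `pSum σ i = r₁ + ⋯ + rᵢ`, the `i`-th partial sum of the composition `σ`. -/
def pSum (σ : List ℕ) (i : ℕ) : ℕ := (σ.take i).sum

/-- Membership in the set `P_σ ⊆ ℕⁿ`: the partial sum of the first `s_i`
coordinates is at most `s_i` for every `i ∈ [k]`. -/
def memP (n : ℕ) (σ : List ℕ) (a : Fin n → ℕ) : Prop :=
  ∀ i, 1 ≤ i → i ≤ σ.length →
    (∑ j ∈ Finset.univ.filter (fun j : Fin n => (j : ℕ) < pSum σ i), a j) ≤ pSum σ i

/-- The number of nonzero coordinates of a tuple. -/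
def nonzeroCount {n : ℕ} (a : Fin n → ℕ) : ℕ :=
  (Finset.univ.filter (fun j => a j ≠ 0)).card

/-- `h_i(σ)`: the number of points of `P_σ` with exactly `i` nonzero coordinates. -/
noncomputable def hVec (n : ℕ) (σ : List ℕ) (i : ℕ) : ℕ :=
  {a : Fin n → ℕ | memP n σ a ∧ nonzeroCount a = i}.ncard

/-- The number of lattice points of the `m`-th dilate of the composition
polytope `Q_σ`, i.e. the Ehrhart polynomial of `Q_σ` evaluated at `m`. -/
noncomputable def ehrCount (n : ℕ) (σ : List ℕ) (m : ℕ) : ℕ :=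
  {a : Fin n → ℕ | ∀ i, 1 ≤ i → i ≤ σ.length →
    (∑ j ∈ Finset.univ.filter (fun j : Fin n => (j : ℕ) < pSum σ i), a j)
      ≤ m * pSum σ i}.ncard

/-! Record a tuple `a ∈ ℕⁿ` of total at most `N` by its prefix sums, a lattice path in an `n × N`
box. Transposing the box exchanges the prefix sums of `a` with the numbers of prefix sums of `a`
above a given level, which are the suffix sums of the tuple `b ∈ ℕᴺ` of multiplicities of
`1, …, N` among the prefix sums of `a`. Hence a bound `t` on the sum of the first `s` coordinates
of `a` is the bound `n - s` on the sum of the coordinates of `b` beyond the `t`-th. Listing `b`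
backwards makes the correspondence symmetric in `a` and `b`, so that it is an involution. -/

/-- The sum of the first `k` coordinates of a tuple. The index `k` is any natural number, the sum
being constant from `k = n` on. -/
def prefixSum {M : Type*} [AddCommMonoid M] {n : ℕ} (a : Fin n → M) (k : ℕ) : M :=
  ∑ j ∈ univ.filter (fun j : Fin n ↦ (j : ℕ) < k), a j

/-- The sum of the coordinates of a tuple at the (zero-based) positions `k, k + 1, …`. -/
def suffixSum {M : Type*} [AddCommMonoid M] {n : ℕ} (a : Fin n → M) (k : ℕ) : M :=
  ∑ j ∈ univ.filter (fun j : Fin n ↦ k ≤ (j : ℕ)), a j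

section AddCommMonoid

variable {M : Type*} [AddCommMonoid M] {n : ℕ} (a : Fin n → M)

lemma prefixSum_zero : prefixSum a 0 = 0 := by
  simp [prefixSum]

lemma prefixSum_eq_sum {k : ℕ} (hk : n ≤ k) : prefixSum a k = ∑ j, a j := by
  rw [prefixSum, filter_true_of_mem fun j _ ↦ j.isLt.trans_le hk]

lemma prefixSum_min (k : ℕ) : prefixSum a (min k n) = prefixSum a k := by
  simp [prefixSum]

lemma prefixSum_succ (j : Fin n) : prefixSum a (j + 1) = a j + prefixSum a j := by
  have hinsert : univ.filter (fun i : Fin n ↦ (i : ℕ) < j + 1) =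
      insert j (univ.filter fun i : Fin n ↦ (i : ℕ) < j) := by
    ext i
    simp only [mem_filter_univ, mem_insert, Fin.ext_iff]
    omega
  rw [prefixSum, hinsert, sum_insert (by simp), prefixSum]

lemma suffixSum_comp_rev (k : ℕ) : suffixSum (a ∘ Fin.rev) k = prefixSum a (n - k) := by
  refine sum_equiv Fin.revPerm (fun j ↦ ?_) fun j _ ↦ rfl
  simp only [mem_filter_univ, Fin.revPerm_apply, Fin.val_rev]
  omega

end AddCommMonoid

lemma prefixSum_injective {M : Type*} [AddCancelCommMonoid M] {n : ℕ} :
    Function.Injective (prefixSum : (Fin n → M) → ℕ → M) := by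
  intro a b hab
  funext j
  have hsucc : a j + prefixSum a j = b j + prefixSum b j := by
    rw [← prefixSum_succ, ← prefixSum_succ, hab]
  rwa [hab, add_left_inj] at hsucc

section CanonicallyOrderedAdd

variable {M : Type*} [AddCommMonoid M] [PartialOrder M] [CanonicallyOrderedAdd M]
  {n : ℕ} (a : Fin n → M)

lemma prefixSum_mono : Monotone (prefixSum a) := by
  intro k l hkl
  refine sum_le_sum_of_subset fun j ↦ ?_
  simp only [mem_filter_univ]
  exact fun hj ↦ hj.trans_le hkl

lemma prefixSum_le_sum (k : ℕ) : prefixSum a k ≤ ∑ j, a j :=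
  sum_le_sum_of_subset (subset_univ _)

end CanonicallyOrderedAdd

lemma card_filter_lt_prefixSum_le_iff {M : Type*} [AddCommMonoid M] [LinearOrder M]
    [CanonicallyOrderedAdd M] {n : ℕ} (a : Fin n → M) (s : ℕ) (c : M) :
    #{k : Fin n | c < prefixSum a (k + 1)} ≤ n - s ↔ prefixSum a s ≤ c := by
  have hcompl : #{k : Fin n | prefixSum a (k + 1) ≤ c} + #{k : Fin n | c < prefixSum a (k + 1)}
      = n := by
    simpa using card_filter_add_card_filter_not (s := (univ : Finset (Fin n)))
      fun k ↦ prefixSum a (k + 1) ≤ c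
  rw [← prefixSum_min a s]
  rcases hp : min s n with _ | p
  · refine iff_of_true ?_ (by simp [prefixSum_zero])
    omega
  · have hinit : p < #{k : Fin n | prefixSum a (k + 1) ≤ c} ↔ prefixSum a (p + 1) ≤ c :=
      Fin.lt_card_filter_univ_iff_apply_of_imp (j := ⟨p, by omega⟩)
        (fun k : Fin n ↦ prefixSum a (k + 1) ≤ c)
        fun _ _ hlk hk ↦ (prefixSum_mono a (Nat.succ_le_succ hlk)).trans hk
    rw [← hinit]
    omega

/-- Two tuples `a ∈ ℕⁿ` and `b ∈ ℕᴺ` are conjugate if the regions above the graphs of their prefix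
sums correspond under the reflection `(s, u) ↦ (N - u, n - s)` of the `n × N` box in its
antidiagonal. The cases `s = 0` and `t = 0` force both totals to fit into the box. -/
def AreConjugate {n N : ℕ} (a : Fin n → ℕ) (b : Fin N → ℕ) : Prop :=
  ∀ s t, prefixSum a s ≤ N - t ↔ prefixSum b t ≤ n - s

namespace AreConjugate

variable {n N : ℕ} {a : Fin n → ℕ} {b b' : Fin N → ℕ}

lemma symm (h : AreConjugate a b) : AreConjugate b a :=
  fun t s ↦ (h s t).symm

lemma prefixSum_le (h : AreConjugate a b) (t : ℕ) : prefixSum b t ≤ n :=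
  (h 0 t).1 (by simp [prefixSum_zero])

lemma sum_le (h : AreConjugate a b) : ∑ j, b j ≤ n :=
  prefixSum_eq_sum b le_rfl ▸ h.prefixSum_le N

lemma right_unique (h : AreConjugate a b) (h' : AreConjugate a b') : b = b' := by
  refine prefixSum_injective (funext fun t ↦ ?_)
  have hiff (s : ℕ) : prefixSum b t ≤ n - s ↔ prefixSum b' t ≤ n - s :=
    (h s t).symm.trans (h' s t)
  have hle := hiff (n - prefixSum b t)
  have hge := hiff (n - prefixSum b' t)
  have hb := h.prefixSum_le t
  have hb' := h'.prefixSum_le t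
  omega

lemma prefixSum_le_iff (h : AreConjugate a b) (s t : ℕ) :
    prefixSum a s ≤ t ↔ suffixSum (b ∘ Fin.rev) t ≤ n - s := by
  have hN := h.symm.prefixSum_le s
  rw [suffixSum_comp_rev, ← h]
  omega

end AreConjugate

/-- The conjugate in `ℕᴺ` of a tuple `a ∈ ℕⁿ` of total at most `N`: its coordinates are the
multiplicities of the values `N, N - 1, …, 1` among the prefix sums of `a`. -/
def conjugateTuple {n : ℕ} (N : ℕ) (a : Fin n → ℕ) (v : Fin N) : ℕ :=
  #{k : Fin n | prefixSum a (k + 1) + v = N}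

section conjugateTuple

variable {n N : ℕ} {a : Fin n → ℕ}

lemma prefixSum_conjugateTuple (ha : ∑ j, a j ≤ N) (t : ℕ) :
    prefixSum (conjugateTuple N a) t = #{k : Fin n | N - t < prefixSum a (k + 1)} := by
  have hfibres : univ.filter (fun k : Fin n ↦ N - t < prefixSum a (k + 1)) =
      (univ.filter fun v : Fin N ↦ (v : ℕ) < t).biUnion
        fun v ↦ univ.filter fun k : Fin n ↦ prefixSum a (k + 1) + v = N := by
    ext k
    have hk := (prefixSum_le_sum a (k + 1)).trans ha
    simp only [mem_filter_univ, mem_biUnion]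
    constructor
    · intro hlt
      exact ⟨⟨N - prefixSum a (k + 1), by omega⟩, by dsimp only; omega, by dsimp only; omega⟩
    · rintro ⟨v, hvt, hv⟩
      omega
  rw [hfibres, card_biUnion]
  · rfl
  · refine fun v _ w _ hvw ↦ disjoint_filter.2 fun k _ hv hw ↦ hvw (Fin.ext ?_)
    omega

lemma areConjugate_conjugateTuple (ha : ∑ j, a j ≤ N) :
    AreConjugate a (conjugateTuple N a) := fun s t ↦ by
  rw [prefixSum_conjugateTuple ha, card_filter_lt_prefixSum_le_iff]

lemma conjugateTuple_conjugateTuple (ha : ∑ j, a j ≤ N) :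
    conjugateTuple n (conjugateTuple N a) = a :=
  have h := areConjugate_conjugateTuple ha
  (areConjugate_conjugateTuple h.sum_le).right_unique h.symm

end conjugateTuple

theorem ehrhart_eq_count_b_tuples_general {ι : Type*} (n N : ℕ) (I : Set ι) (s t : ι → ℕ) :
    {a : Fin n → ℕ | ∑ j, a j ≤ N ∧ ∀ i ∈ I, prefixSum a (s i) ≤ t i}.ncard =
      {b : Fin N → ℕ | ∑ j, b j ≤ n ∧ ∀ i ∈ I, suffixSum b (t i) ≤ n - s i}.ncard := by
  have sum_rev (b : Fin N → ℕ) : ∑ j, (b ∘ Fin.rev) j = ∑ j, b j := Equiv.sum_comp Fin.revPerm b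
  have rev_rev (b : Fin N → ℕ) : (b ∘ Fin.rev) ∘ Fin.rev = b := by
    rw [Function.comp_assoc, Fin.rev_involutive.comp_self, Function.comp_id]
  refine (Set.InvOn.bijOn (f := fun a ↦ conjugateTuple N a ∘ Fin.rev)
    (f' := fun b ↦ conjugateTuple n (b ∘ Fin.rev)) ⟨?_, ?_⟩ ?_ ?_).ncard_eq
  · rintro a ⟨ha, -⟩
    simp only [rev_rev, conjugateTuple_conjugateTuple ha]
  · rintro b ⟨hb, -⟩
    rw [← sum_rev] at hb
    simp only [conjugateTuple_conjugateTuple hb, rev_rev]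
  · rintro a ⟨ha, hat⟩
    have h := areConjugate_conjugateTuple ha
    exact ⟨(sum_rev _).trans_le h.sum_le, fun i hi ↦ (h.prefixSum_le_iff _ _).1 (hat i hi)⟩
  · rintro b ⟨hb, hbt⟩
    rw [← sum_rev] at hb
    have h := (areConjugate_conjugateTuple hb).symm
    refine ⟨h.symm.sum_le, fun i hi ↦ (h.prefixSum_le_iff _ _).2 ?_⟩
    rw [rev_rev]
    exact hbt i hi

lemma pSum_length (σ : List ℕ) : pSum σ σ.length = σ.sum := by
  rw [pSum, List.take_length]

lemma forall_prefixSum_pSum_le_iff {n : ℕ} {σ : List ℕ} (hsum : σ.sum = n) (m : ℕ)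
    (a : Fin n → ℕ) :
    (∀ i, 1 ≤ i → i ≤ σ.length → prefixSum a (pSum σ i) ≤ m * pSum σ i) ↔
      ∑ j, a j ≤ m * n ∧
        ∀ i ∈ Set.Icc 1 (σ.length - 1), prefixSum a (pSum σ i) ≤ m * pSum σ i := by
  have hlast : pSum σ σ.length = n := (pSum_length σ).trans hsum
  have hlast_iff : prefixSum a (pSum σ σ.length) ≤ m * pSum σ σ.length ↔ ∑ j, a j ≤ m * n := by
    rw [hlast, prefixSum_eq_sum a le_rfl]
  constructor
  · intro h
    refine ⟨?_, fun i hi ↦ h i hi.1 (hi.2.trans (Nat.sub_le _ _))⟩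
    rcases σ.length.eq_zero_or_pos with hzero | hlen
    · obtain rfl : n = 0 := by rw [← hsum, List.length_eq_zero_iff.1 hzero, List.sum_nil]
      simp
    · exact hlast_iff.1 (h _ hlen le_rfl)
  · rintro ⟨hle, h⟩ i hi hik
    rcases hik.lt_or_eq with hlt | rfl
    · exact h i ⟨hi, Nat.le_sub_one_of_lt hlt⟩
    · exact hlast_iff.2 hle

/-- `Ehr(Q_σ, m)` equals the number of tuples `(b₁, …, b_{mn}) ∈ ℕ^{mn}` with
`b₁ + ⋯ + b_{mn} ≤ n` and `b_{s_i m + 1} + ⋯ + b_{mn} ≤ n - s_i` for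
`i ∈ [k-1]`. -/
theorem ehrhart_eq_count_b_tuples (n : ℕ) (hn : 0 < n) (σ : List ℕ)
    (hpos : ∀ r ∈ σ, 0 < r) (hsum : σ.sum = n) (m : ℕ) (hm : 1 ≤ m) :
    ehrCount n σ m =
      {b : Fin (m * n) → ℕ |
        (∑ j, b j) ≤ n ∧
        ∀ i, 1 ≤ i → i ≤ σ.length - 1 →
          (∑ j ∈ Finset.univ.filter
              (fun j : Fin (m * n) => pSum σ i * m ≤ (j : ℕ)), b j)
            ≤ n - pSum σ i}.ncard := by
  have hehr : ehrCount n σ m = {a : Fin n → ℕ | ∑ j, a j ≤ m * n ∧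
      ∀ i ∈ Set.Icc 1 (σ.length - 1), prefixSum a (pSum σ i) ≤ m * pSum σ i}.ncard :=
    congrArg Set.ncard (Set.ext (forall_prefixSum_pSum_le_iff hsum m))
  rw [hehr, ehrhart_eq_count_b_tuples_general]
  simp only [suffixSum, Set.mem_Icc, and_imp, mul_comm m]
end

section
/- For every n ∈ ℕ, the polynomial identity Σ_{i=0}^{n} C(n,i)^2 t^i = Σ_{i=0}^{⌊n/2⌋} C(n,i)·C(n−i,i) t^i (1+t)^{n−2i} holds, where C(a,b) denotes the binomial coefficient. -/
/-!
Both sides are compared coefficientwise. Choosing disjoint sets of sizes `i`, `i` and `k - i` from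
`n` points, in two different orders, shows that the `i`-th summand on the right contributes
`C(n,k) C(k,i) C(n-k,i)` to the coefficient of `t^k`, and Vandermonde's identity sums these to
`C(n,k)²`. The argument is insensitive to replacing the second `i` by `i + a`, which expands
`∑ C(n,i) C(n,i+a) tⁱ` instead.
-/

open Finset Polynomial

theorem choose_mul_choose_sub_comm (n a b : ℕ) :
    n.choose a * (n - a).choose b = n.choose b * (n - b).choose a :=
  calc
    n.choose a * (n - a).choose b = n.choose (a + b) * (a + b).choose a := by
      rw [Nat.choose_mul (Nat.le_add_right a b), Nat.add_sub_cancel_left]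
    _ = n.choose (a + b) * (a + b).choose b := by rw [Nat.choose_symm_add]
    _ = n.choose b * (n - b).choose a := by
      rw [Nat.choose_mul (Nat.le_add_left b a), Nat.add_sub_cancel]

theorem choose_mul_choose_sub_mul_choose_sub_add {i k : ℕ} (hik : i ≤ k) (n j : ℕ) :
    n.choose i * (n - i).choose j * (n - (i + j)).choose (k - i) =
      n.choose k * (k.choose i * (n - k).choose j) :=
  calc
    n.choose i * (n - i).choose j * (n - (i + j)).choose (k - i)
        = n.choose i * ((n - i).choose (k - i) * (n - i - (k - i)).choose j) := by
      rw [← Nat.sub_sub, mul_assoc, choose_mul_choose_sub_comm (n - i)]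
    _ = n.choose i * (n - i).choose (k - i) * (n - k).choose j := by
      rw [mul_assoc, Nat.sub_sub, Nat.add_sub_cancel' hik]
    _ = n.choose k * (k.choose i * (n - k).choose j) := by
      rw [← Nat.choose_mul hik, mul_assoc]

theorem sum_range_choose_mul_choose_add (p q a : ℕ) :
    ∑ i ∈ range (p + 1), p.choose i * q.choose (i + a) = (p + q).choose (p + a) := by
  induction p generalizing a with
  | zero => simp
  | succ p ih =>
    have pascal := sum_choose_succ_mul (fun i _ ↦ q.choose (i + a)) p
    simp only [Nat.cast_id, add_assoc, add_comm 1 a] at pascal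
    rw [pascal, ih, ih, Nat.add_right_comm p 1 q, Nat.add_right_comm p 1 a, Nat.choose_succ_succ',
      add_assoc p a 1]

theorem sum_range_half_choose_mul_choose_add (p q a : ℕ) :
    ∑ i ∈ range ((p + q) / 2 + 1), p.choose i * q.choose (i + a) = (p + q).choose (p + a) := by
  rw [← sum_range_choose_mul_choose_add]
  refine sum_congr_of_eq_on_inter (fun i _ hi ↦ ?_) (fun i _ hi ↦ ?_) (fun _ _ _ ↦ rfl)
  · rw [Nat.choose_eq_zero_of_lt (by simpa using hi), zero_mul]
  · rw [mem_range] at hi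
    obtain hp | hq : p < i ∨ q < i + a := by omega
    · rw [Nat.choose_eq_zero_of_lt hp, zero_mul]
    · rw [Nat.choose_eq_zero_of_lt hq, mul_zero]

section Semiring

variable (R : Type*) [Semiring R]

theorem coeff_choose_mul_X_pow_mul_one_add_X_pow (n i j k : ℕ) :
    (C ((n.choose i * (n - i).choose j : ℕ) : R) * X ^ i * (1 + X) ^ (n - (i + j))).coeff k =
      ((n.choose k * (k.choose i * (n - k).choose j) : ℕ) : R) := by
  rw [mul_assoc, coeff_C_mul, coeff_X_pow_mul']
  split_ifs with hik
  · rw [coeff_one_add_X_pow, ← Nat.cast_mul, choose_mul_choose_sub_mul_choose_sub_add hik]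
  · rw [Nat.choose_eq_zero_of_lt (not_le.mp hik), zero_mul, mul_zero, mul_zero, Nat.cast_zero]

theorem coeff_sum_range_choose_mul_X_pow (n k : ℕ) (f : ℕ → ℕ) :
    (∑ i ∈ range (n + 1), C ((n.choose i * f i : ℕ) : R) * X ^ i).coeff k =
      ((n.choose k * f k : ℕ) : R) := by
  simp only [finsetSum_coeff, coeff_C_mul_X_pow, sum_ite_eq, mem_range]
  split_ifs with hk
  · rfl
  · rw [Nat.choose_eq_zero_of_lt (by omega), zero_mul, Nat.cast_zero]

-- Where `n - (2 * i + a)` truncates, the coefficient `(n - i).choose (i + a)` vanishes.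
theorem central_binomial_gamma_general (n a : ℕ) :
    ∑ i ∈ range (n + 1), C ((n.choose i * n.choose (i + a) : ℕ) : R) * X ^ i =
      ∑ i ∈ range (n / 2 + 1), C ((n.choose i * (n - i).choose (i + a) : ℕ) : R) * X ^ i *
        (1 + X) ^ (n - (2 * i + a)) := by
  ext k
  rw [coeff_sum_range_choose_mul_X_pow R n k fun i ↦ n.choose (i + a), finsetSum_coeff]
  simp only [two_mul, add_assoc, coeff_choose_mul_X_pow_mul_one_add_X_pow]
  rw [← Nat.cast_sum, ← mul_sum]
  obtain hnk | hkn := lt_or_ge n k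
  · rw [Nat.choose_eq_zero_of_lt hnk, zero_mul, zero_mul]
  · obtain ⟨q, rfl⟩ := Nat.exists_eq_add_of_le hkn
    rw [Nat.add_sub_cancel_left, sum_range_half_choose_mul_choose_add]

end Semiring

/-- The gamma-expansion of `∑ C(n,i)² tⁱ`:
`∑_{i=0}^{n} C(n,i)² tⁱ = ∑_{i=0}^{⌊n/2⌋} C(n,i)·C(n-i,i) tⁱ (1+t)^{n-2i}`. -/
theorem central_binomial_gamma (n : ℕ) :
    (∑ i ∈ Finset.range (n + 1),
        Polynomial.C ((n.choose i) ^ 2) * X ^ i : Polynomial ℕ) =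
      ∑ i ∈ Finset.range (n / 2 + 1),
        Polynomial.C (n.choose i * (n - i).choose i) * X ^ i *
          (1 + X) ^ (n - 2 * i) := by
  simpa only [Nat.cast_id, add_zero, sq] using
    central_binomial_gamma_general ℕ n 0
end

section
/- Let n be a positive integer and let σ = (1,1,...,1) be the composition of n with all parts equal to 1, so that P_σ consists of all (a_1,...,a_n) ∈ ℕ^n with a_1 + ... + a_j ≤ j for every j ∈ {1,...,n}. Then for every 0 ≤ i ≤ n, (i+1) · h_i(σ) = C(n,i) · C(n+1,i), i.e., h_i(σ) is the Narayana number (1/(i+1))·C(n,i)·C(n+1,i). -/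
open Finset Polynomial

/-!
Relax the bound on the partial sums to `a₁ + ⋯ + aⱼ ≤ j + c`. Removing the first coordinate `x` of
such a tuple leaves one with slack `c + 1 - x`, so the number `N(n, c, k)` of tuples with `k`
nonzero coordinates satisfies
`N(n + 1, c, k + 1) = N(n, c + 1, k + 1) + ∑ t ≤ c, N(n, t, k)`.
The `2 × 2` determinant `C(n + 1, k + 1) C(n + c, k) - C(n, k + 1) C(n + c + 1, k)` satisfies the
same recursion, because the lower boundary terms of the two hockey-stick sums over `t` cancel. At
`c = 0` the determinant is the Narayana number.
-/

theorem ncard_eq_sum_ncard_cons {α : Type*} {n : ℕ} {S : Set (Fin (n + 1) → α)} (hS : S.Finite)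
    {s : Finset α} (hs : ∀ a ∈ S, a 0 ∈ s) :
    S.ncard = ∑ x ∈ s, {b : Fin n → α | Fin.cons x b ∈ S}.ncard := by
  classical
  have fiber (x : α) : {a ∈ S | a 0 = x} = Fin.cons x '' {b : Fin n → α | Fin.cons x b ∈ S} := by
    ext a
    constructor
    · rintro ⟨ha, rfl⟩
      exact ⟨Fin.tail a, by simpa using ha, Fin.cons_self_tail a⟩
    · rintro ⟨b, hb, rfl⟩
      exact ⟨hb, rfl⟩
  calc S.ncard = ∑ x ∈ s, (hS.toFinset.filter fun a => a 0 = x).card := by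
        rw [Set.ncard_eq_toFinset_card S hS]
        exact card_eq_sum_card_fiberwise fun a ha => hs a (hS.mem_toFinset.1 ha)
    _ = ∑ x ∈ s, {b : Fin n → α | Fin.cons x b ∈ S}.ncard := by
        refine sum_congr rfl fun x _ => ?_
        rw [← Set.ncard_image_of_injective {b : Fin n → α | Fin.cons x b ∈ S}
          (Fin.cons_right_injective (α := fun _ => α) x), ← fiber, ← Set.ncard_coe_finset]
        simp only [coe_filter, Set.Finite.mem_toFinset]

theorem sum_filter_lt_succ_cons {M : Type*} [AddCommMonoid M] {n : ℕ} (x : M) (b : Fin n → M)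
    (j : ℕ) :
    ∑ t : Fin (n + 1) with t.val < j + 1, (Fin.cons x b : Fin (n + 1) → M) t =
      x + ∑ t : Fin n with t.val < j, b t := by
  simp only [sum_filter, Fin.sum_univ_succ, Fin.cons_zero, Fin.cons_succ, Fin.val_zero,
    Fin.val_succ, Nat.succ_pos, Nat.add_lt_add_iff_right, if_true]

theorem nonzeroCount_cons_zero {n : ℕ} (b : Fin n → ℕ) :
    nonzeroCount (Fin.cons 0 b : Fin (n + 1) → ℕ) = nonzeroCount b := by
  simp [nonzeroCount, Fin.card_filter_univ_succ]

theorem nonzeroCount_cons_succ {n : ℕ} (x : ℕ) (b : Fin n → ℕ) :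
    nonzeroCount (Fin.cons (x + 1) b : Fin (n + 1) → ℕ) = nonzeroCount b + 1 := by
  simp [nonzeroCount, Fin.card_filter_univ_succ]

theorem nonzeroCount_eq_zero_iff {n : ℕ} {a : Fin n → ℕ} : nonzeroCount a = 0 ↔ a = 0 := by
  simp [nonzeroCount, filter_eq_empty_iff, funext_iff]

/-- The tuple `a` has slack `c` if `a₁ + ⋯ + aⱼ ≤ j + c` for all `1 ≤ j ≤ n`. The sum runs over the
0-based indices `t < j`, so that for `c = 0` this is membership in `P_(1,…,1)`. -/
def HasSlack {n : ℕ} (c : ℕ) (a : Fin n → ℕ) : Prop :=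
  ∀ j, 1 ≤ j → j ≤ n → ∑ t : Fin n with t.val < j, a t ≤ j + c

/-- The tuples of slack `c` with exactly `k` nonzero coordinates; their number is `h_k(1,…,1)` when
`c = 0`. -/
def slackTuples (n c k : ℕ) : Set (Fin n → ℕ) :=
  {a | HasSlack c a ∧ nonzeroCount a = k}

theorem hasSlack_zero (n c : ℕ) : HasSlack c (0 : Fin n → ℕ) := by
  simp [HasSlack]

theorem HasSlack.apply_le {n c : ℕ} {a : Fin n → ℕ} (ha : HasSlack c a) (t : Fin n) :
    a t ≤ t + 1 + c :=
  (single_le_sum_of_canonicallyOrdered (by simp)).trans (ha (t + 1) (by omega) t.isLt)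

theorem hasSlack_cons_iff {n c x : ℕ} {b : Fin n → ℕ} :
    HasSlack c (Fin.cons x b : Fin (n + 1) → ℕ) ↔ x ≤ c + 1 ∧ HasSlack (c + 1 - x) b := by
  constructor
  · intro h
    have hx : x ≤ c + 1 := by simpa [add_comm] using h.apply_le 0
    refine ⟨hx, fun j _ hjn => ?_⟩
    have := h (j + 1) (by omega) (by omega)
    rw [sum_filter_lt_succ_cons] at this
    omega
  · rintro ⟨hx, hb⟩ (_ | _ | j) hj hjn
    · omega
    · rw [sum_filter_lt_succ_cons]
      simpa [add_comm] using hx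
    · have := hb (j + 1) (by omega) (by omega)
      rw [sum_filter_lt_succ_cons]
      omega

theorem finite_slackTuples (n c k : ℕ) : (slackTuples n c k).Finite :=
  (Set.finite_Iic fun t : Fin n => (t : ℕ) + 1 + c).subset fun _ ha => ha.1.apply_le

theorem cons_zero_mem_slackTuples_iff {n c k : ℕ} {b : Fin n → ℕ} :
    Fin.cons 0 b ∈ slackTuples (n + 1) c k ↔ b ∈ slackTuples n (c + 1) k := by
  simp [slackTuples, hasSlack_cons_iff, nonzeroCount_cons_zero]

theorem cons_succ_mem_slackTuples_iff {n c k x : ℕ} (hx : x ≤ c) {b : Fin n → ℕ} :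
    Fin.cons (x + 1) b ∈ slackTuples (n + 1) c (k + 1) ↔ b ∈ slackTuples n (c - x) k := by
  simp [slackTuples, hasSlack_cons_iff, nonzeroCount_cons_succ, hx]

theorem slackTuples_zero_right (n c : ℕ) : slackTuples n c 0 = {0} := by
  ext a
  simp only [slackTuples, nonzeroCount_eq_zero_iff, Set.mem_ofPred_eq, Set.mem_singleton_iff,
    and_iff_right_iff_imp]
  rintro rfl
  exact hasSlack_zero n c

theorem slackTuples_zero_succ (c k : ℕ) : slackTuples 0 c (k + 1) = ∅ := by
  simp [slackTuples, nonzeroCount]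

theorem ncard_slackTuples_succ (n c k : ℕ) :
    (slackTuples (n + 1) c (k + 1)).ncard =
      (slackTuples n (c + 1) (k + 1)).ncard + ∑ t ∈ range (c + 1), (slackTuples n t k).ncard := by
  have first_mem : ∀ a ∈ slackTuples (n + 1) c (k + 1), a 0 ∈ range (c + 1 + 1) := fun a ha => by
    have := ha.1.apply_le 0
    simp only [Fin.val_zero] at this
    exact mem_range.2 (by omega)
  rw [ncard_eq_sum_ncard_cons (finite_slackTuples _ _ _) first_mem, sum_range_succ', add_comm,
    ← sum_range_reflect fun t => (slackTuples n t k).ncard]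
  congr 1
  · simp only [cons_zero_mem_slackTuples_iff, Set.ofPred_mem_eq]
  · refine sum_congr rfl fun x hx => ?_
    simp only [cons_succ_mem_slackTuples_iff (mem_range_succ_iff.1 hx), Set.ofPred_mem_eq,
      Nat.add_sub_cancel]

theorem sum_range_choose_add_left (n m k : ℕ) :
    ∑ t ∈ range m, (n + t).choose k + n.choose (k + 1) = (n + m).choose (k + 1) := by
  induction m with
  | zero => simp
  | succ m ih => rw [sum_range_succ, ← add_assoc n m 1, Nat.choose_succ_succ, ← ih]; ring

theorem ncard_slackTuples_add_choose_mul_choose (n c k : ℕ) :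
    (slackTuples n c k).ncard + n.choose (k + 1) * (n + c + 1).choose k =
      (n + 1).choose (k + 1) * (n + c).choose k := by
  induction n generalizing c k with
  | zero =>
    cases k with
    | zero => simp [slackTuples_zero_right]
    | succ k => simp [slackTuples_zero_succ, Nat.choose_eq_zero_of_lt]
  | succ n ih =>
    cases k with
    | zero => simp [slackTuples_zero_right, add_comm]
    | succ k =>
      have sum_eq : ∑ t ∈ range (c + 1), (slackTuples n t k).ncard +
          n.choose (k + 1) * (n + c + 2).choose (k + 1) =
            (n + 1).choose (k + 1) * (n + c + 1).choose (k + 1) := by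
        have sum_ih := sum_congr rfl fun t (_ : t ∈ range (c + 1)) => ih t k
        simp only [sum_add_distrib, ← mul_sum] at sum_ih
        have lower : ∑ t ∈ range (c + 1), (n + t).choose k + n.choose (k + 1) =
            (n + c + 1).choose (k + 1) := sum_range_choose_add_left n (c + 1) k
        have upper : ∑ t ∈ range (c + 1), (n + t + 1).choose k + (n + 1).choose (k + 1) =
            (n + c + 2).choose (k + 1) := by
          simpa only [← add_assoc, add_right_comm n 1] using
            sum_range_choose_add_left (n + 1) (c + 1) k
        rw [← upper, ← lower]
        linarith
      have ih_tail : (slackTuples n (c + 1) (k + 1)).ncard +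
          n.choose (k + 2) * (n + c + 2).choose (k + 1) =
            (n + 1).choose (k + 2) * (n + c + 1).choose (k + 1) := ih (c + 1) (k + 1)
      rw [ncard_slackTuples_succ, add_right_comm n 1 c, Nat.choose_succ_succ' n,
        Nat.choose_succ_succ' (n + 1)]
      linarith

/-- For the composition `σ = (1,1,…,1)` of `n`, `h_i(σ)` is the Narayana
number `(1/(i+1))·C(n,i)·C(n+1,i)`. -/
theorem hVec_all_ones_narayana (n : ℕ) (hn : 0 < n) (i : ℕ) (hi : i ≤ n) :
    (i + 1) *
        {a : Fin n → ℕ |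
          (∀ j, 1 ≤ j → j ≤ n →
            (∑ t ∈ Finset.univ.filter (fun t : Fin n => (t : ℕ) < j), a t) ≤ j) ∧
          nonzeroCount a = i}.ncard =
      n.choose i * (n + 1).choose i := by
  change (i + 1) * (slackTuples n 0 i).ncard = _
  have det : (slackTuples n 0 i).ncard + n.choose (i + 1) * (n + 1).choose i =
      (n + 1).choose (i + 1) * n.choose i := ncard_slackTuples_add_choose_mul_choose n 0 i
  have left : n.choose (i + 1) * (i + 1) = n.choose i * (n - i) := Nat.choose_succ_right_eq n i
  have right : (n + 1).choose (i + 1) * (i + 1) = (n + 1).choose i * (n - i + 1) := by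
    rw [Nat.choose_succ_right_eq, Nat.sub_add_comm hi]
  apply Nat.add_right_cancel (m := n.choose i * (n - i) * (n + 1).choose i)
  calc (i + 1) * (slackTuples n 0 i).ncard + n.choose i * (n - i) * (n + 1).choose i
      = (i + 1) * ((slackTuples n 0 i).ncard + n.choose (i + 1) * (n + 1).choose i) := by
        rw [← left]; ring
    _ = (n + 1).choose (i + 1) * (i + 1) * n.choose i := by rw [det]; ring
    _ = n.choose i * (n + 1).choose i + n.choose i * (n - i) * (n + 1).choose i := by
        rw [right]; ring
end

section
/- Let n be a positive integer and 0 ≤ i ≤ ⌊n/2⌋. The number of pairs (S,T) of disjoint i-element subsets of {1,...,n} such that, for every r ∈ {1,...,i}, the r-th largest element of T is smaller than the r-th largest element of S, equals C(n,2i) · (1/(i+1))·C(2i,i); equivalently, (i+1) times this number equals C(n,i)·C(n−i,i). -/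
open Finset

/-!
Set `U = S ∪ T`. Since `S` and `T` are disjoint, `T` is dominated by `S` exactly when every upper
segment of `U` contains at least as many elements of `S` as of `T`. So, reading `U` downwards,
the pair is a ballot sequence on `U`. Deleting the least element of `U` gives Pascal's recurrence
for the number of these sequences, with a reflected boundary condition, whence André's difference
of two binomial coefficients; when `S` and `T` have the same size `i`, this is the Catalan number
`catalan i`. It remains to choose `U`.
-/

section BallotSubsets

variable {α : Type*} [LinearOrder α] {U T : Finset α} {a b i : ℕ} {m : α}

/-- The ballot sequences on `U` in which the trailing candidate receives `a` votes: `U`, read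
downwards, lists the voters, and a member of `ballotSubsets U a` is the set of those voting for the
candidate who is never ahead. -/
def ballotSubsets (U : Finset α) (a : ℕ) : Finset (Finset α) :=
  {T ∈ U.powersetCard a | ∀ m ∈ U, 2 * #{x ∈ T | m ≤ x} ≤ #{x ∈ U | m ≤ x}}

lemma mem_ballotSubsets :
    T ∈ ballotSubsets U a ↔
      (T ⊆ U ∧ #T = a) ∧ ∀ m ∈ U, 2 * #{x ∈ T | m ≤ x} ≤ #{x ∈ U | m ≤ x} := by
  rw [ballotSubsets, mem_filter, mem_powersetCard]

lemma ballotSubsets_zero (U : Finset α) : ballotSubsets U 0 = {∅} := by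
  simp [ballotSubsets, filter_singleton]

lemma two_mul_le_card_of_mem_ballotSubsets (hT : T ∈ ballotSubsets U a) : 2 * a ≤ #U := by
  obtain ⟨⟨hTU, rfl⟩, hballot⟩ := mem_ballotSubsets.1 hT
  obtain rfl | hU := U.eq_empty_or_nonempty
  · simp [subset_empty.1 hTU]
  · have hmin : ∀ x ∈ U, U.min' hU ≤ x := fun x hx ↦ U.min'_le x hx
    simpa only [filter_true_of_mem hmin, filter_true_of_mem fun x hx ↦ hmin x (hTU hx)]
      using hballot _ (U.min'_mem hU)

lemma ballotSubsets_eq_empty (h : #U < 2 * a) : ballotSubsets U a = ∅ :=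
  eq_empty_of_forall_notMem fun _ hT ↦ h.not_ge (two_mul_le_card_of_mem_ballotSubsets hT)

lemma ballotSubsets_insert_succ (hm : ∀ x ∈ U, m < x) (ha : 2 * (a + 1) ≤ #U + 1) :
    ballotSubsets (insert m U) (a + 1) =
      ballotSubsets U (a + 1) ∪ (ballotSubsets U a).image (insert m) := by
  have hmU : m ∉ U := fun h ↦ (hm m h).false
  have filter_insert_min (V : Finset α) (u : α) (hu : u ∈ U) :
      {x ∈ insert m V | u ≤ x} = {x ∈ V | u ≤ x} := by
    rw [filter_insert, if_neg (hm u hu).not_ge]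
  have ballot_insert_iff (T : Finset α) (hT : #T = a + 1) :
      (∀ u ∈ insert m U, 2 * #{x ∈ T | u ≤ x} ≤ #{x ∈ insert m U | u ≤ x}) ↔
        ∀ u ∈ U, 2 * #{x ∈ T | u ≤ x} ≤ #{x ∈ U | u ≤ x} := by
    have hall : {x ∈ insert m U | m ≤ x} = insert m U :=
      filter_true_of_mem <| forall_mem_insert _ _ _ |>.2 ⟨le_rfl, fun x hx ↦ (hm x hx).le⟩
    have hmin : 2 * #{x ∈ T | m ≤ x} ≤ #{x ∈ insert m U | m ≤ x} := by
      rw [hall, card_insert_of_notMem hmU]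
      exact (Nat.mul_le_mul_left 2 ((card_filter_le _ _).trans hT.le)).trans ha
    rw [forall_mem_insert, and_iff_right hmin]
    exact forall₂_congr fun u hu ↦ by rw [filter_insert_min U u hu]
  unfold ballotSubsets
  rw [filter_congr fun T hT ↦ ballot_insert_iff T (mem_powersetCard.1 hT).2,
    powersetCard_succ_insert hmU, filter_union, filter_image]
  congr 2
  exact filter_congr fun T _ ↦ forall₂_congr fun u hu ↦ by rw [filter_insert_min T u hu]

lemma card_ballotSubsets_insert_succ (hm : ∀ x ∈ U, m < x) (ha : 2 * (a + 1) ≤ #U + 1) :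
    #(ballotSubsets (insert m U) (a + 1)) = #(ballotSubsets U (a + 1)) + #(ballotSubsets U a) := by
  have notMem_of_mem {c : ℕ} {T : Finset α} (hT : T ∈ ballotSubsets U c) : m ∉ T :=
    fun h ↦ (hm m ((mem_ballotSubsets.1 hT).1.1 h)).false
  rw [ballotSubsets_insert_succ hm ha, card_union_of_disjoint, card_image_of_injOn]
  · intro T hT T' hT' h
    rw [← erase_insert (notMem_of_mem hT), ← erase_insert (notMem_of_mem hT'), h]
  · refine disjoint_right.2 fun T hT hT' ↦ ?_
    obtain ⟨T, -, rfl⟩ := mem_image.1 hT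
    exact notMem_of_mem hT' (mem_insert_self m T)

/-- The reflected term is `C(a + b, a - 1)`, written so that it vanishes for `a = 0`. -/
lemma card_ballotSubsets_add_choose (hU : #U = a + b) (hab : a ≤ b + 1) :
    #(ballotSubsets U a) + (a + b).choose (b + 1) = (a + b).choose a := by
  induction U using Finset.induction_on_min generalizing a b with
  | empty =>
    obtain ⟨rfl, rfl⟩ : a = 0 ∧ b = 0 := by simpa [eq_comm] using hU
    simp [ballotSubsets_zero]
  | insert m U hm ih =>
    obtain rfl | hlt := hab.eq_or_lt
    · simp [ballotSubsets_eq_empty (show #(insert m U) < 2 * (b + 1) by omega)]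
    obtain - | a := a
    · simp [ballotSubsets_zero]
    obtain ⟨b, rfl⟩ : ∃ c, b = c + 1 := ⟨b - 1, by omega⟩
    rw [card_insert_of_notMem fun h ↦ (hm m h).false] at hU
    have hwithout := ih (a := a + 1) (b := b) (by omega) (by omega)
    have hwith := ih (a := a) (b := b + 1) (by omega) (by omega)
    rw [card_ballotSubsets_insert_succ hm (by omega), ← add_assoc, Nat.choose_succ_succ',
      Nat.choose_succ_succ']
    rw [show a + 1 + b = a + (b + 1) by ring] at *
    omega

lemma card_ballotSubsets_eq_catalan (hU : #U = 2 * i) : #(ballotSubsets U i) = catalan i := by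
  have hreflect := card_ballotSubsets_add_choose (hU.trans (two_mul i)) i.le_succ
  have hratio : (i + i).choose (i + 1) * (i + 1) = (i + i).choose i * i := by
    rw [Nat.choose_succ_right_eq, Nat.add_sub_cancel]
  refine Nat.eq_of_mul_eq_mul_left (Nat.add_one_pos i) ?_
  rw [succ_mul_catalan_eq_centralBinom, Nat.centralBinom_eq_two_mul_choose, two_mul]
  linear_combination (i + 1) * hreflect - hratio

end BallotSubsets

section Dominance

variable {α : Type*} [LinearOrder α] {S T : Finset α} {d m : α} {i j : ℕ}

lemma le_getD_iff_lt_countP {l : List α} (hl : l.Pairwise (· ≥ ·)) (hj : j < l.length) :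
    m ≤ l.getD j d ↔ j < l.countP (m ≤ ·) := by
  induction l generalizing j with
  | nil => simp at hj
  | cons x l ih =>
    obtain ⟨hx, hl⟩ := List.pairwise_cons.1 hl
    by_cases hm : m ≤ x
    · rw [List.countP_cons_of_pos (by simpa using hm)]
      cases j with
      | zero => simpa using hm
      | succ j => simpa using ih hl (by simpa using hj)
    · have hlt : ∀ y ∈ x :: l, ¬ m ≤ y :=
        List.forall_mem_cons.2 ⟨hm, fun y hy h ↦ hm (h.trans (hx y hy))⟩
      have hcount : (x :: l).countP (m ≤ ·) = 0 := by simpa [List.countP_eq_zero] using hlt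
      rw [hcount, List.getD_eq_getElem _ _ hj]
      simpa using hlt _ (List.getElem_mem hj)

lemma le_getD_sort_iff_lt_card_filter (hj : j < #S) :
    m ≤ (S.sort (· ≥ ·)).getD j d ↔ j < #{x ∈ S | m ≤ x} := by
  rw [le_getD_iff_lt_countP (S.pairwise_sort _) (by simpa using hj), ← Multiset.coe_countP,
    sort_eq, Multiset.countP_eq_card_filter]
  rfl

lemma getD_sort_mem (hj : j < #S) : (S.sort (· ≥ ·)).getD j d ∈ S := by
  rw [List.getD_eq_getElem _ _ (by simpa using hj)]
  exact (S.mem_sort _).1 (List.getElem_mem _)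

lemma forall_getD_sort_le_iff {U : Finset α} (hTU : T ⊆ U) (hcard : #T ≤ #S) :
    (∀ j < #T, (T.sort (· ≥ ·)).getD j d ≤ (S.sort (· ≥ ·)).getD j d) ↔
      ∀ m ∈ U, #{x ∈ T | m ≤ x} ≤ #{x ∈ S | m ≤ x} := by
  constructor
  · refine fun hle m _ ↦ le_of_forall_lt fun j hj ↦ ?_
    have hjT : j < #T := hj.trans_le (card_filter_le _ _)
    exact (le_getD_sort_iff_lt_card_filter (hjT.trans_le hcard)).1
      (((le_getD_sort_iff_lt_card_filter hjT).2 hj).trans (hle j hjT))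
  · refine fun hle j hjT ↦ (le_getD_sort_iff_lt_card_filter (hjT.trans_le hcard)).2 ?_
    exact ((le_getD_sort_iff_lt_card_filter hjT).1 le_rfl).trans_le
      (hle _ (hTU (getD_sort_mem hjT)))

/-- The pairs `(S, T)` of disjoint `i`-element subsets of `A` in which the `r`-th largest element of
`T` is smaller than that of `S`, for `1 ≤ r ≤ i`. Lists are indexed from `0`, and since the index
`r - 1` is in range, `getD` never returns its default value `d`. -/
def dominatedPairs (A : Finset α) (d : α) (i : ℕ) : Set (Finset α × Finset α) :=
  {q | q.1 ⊆ A ∧ q.2 ⊆ A ∧ #q.1 = i ∧ #q.2 = i ∧ Disjoint q.1 q.2 ∧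
    ∀ r, 1 ≤ r → r ≤ i →
      (q.2.sort (· ≥ ·)).getD (r - 1) d < (q.1.sort (· ≥ ·)).getD (r - 1) d}

lemma mem_ballotSubsets_union_iff (hdisj : Disjoint S T) (hS : #S = i) (hT : #T = i) :
    T ∈ ballotSubsets (S ∪ T) i ↔
      ∀ r, 1 ≤ r → r ≤ i →
        (T.sort (· ≥ ·)).getD (r - 1) d < (S.sort (· ≥ ·)).getD (r - 1) d := by
  have two_mul_le_iff (m : α) :
      2 * #{x ∈ T | m ≤ x} ≤ #{x ∈ S ∪ T | m ≤ x} ↔ #{x ∈ T | m ≤ x} ≤ #{x ∈ S | m ≤ x} := by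
    rw [filter_union, card_union_of_disjoint (disjoint_filter_filter hdisj), two_mul,
      add_le_add_iff_right]
  have lt_iff_le (j : ℕ) (hj : j < i) :
      (T.sort (· ≥ ·)).getD j d < (S.sort (· ≥ ·)).getD j d ↔
        (T.sort (· ≥ ·)).getD j d ≤ (S.sort (· ≥ ·)).getD j d :=
    (disjoint_iff_ne.1 hdisj _ (getD_sort_mem (hS ▸ hj)) _
      (getD_sort_mem (hT ▸ hj))).symm.le_iff_lt.symm
  calc
    T ∈ ballotSubsets (S ∪ T) i
    _ ↔ ∀ m ∈ S ∪ T, #{x ∈ T | m ≤ x} ≤ #{x ∈ S | m ≤ x} := by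
      rw [mem_ballotSubsets, and_iff_right ⟨subset_union_right, hT⟩]
      exact forall₂_congr fun m _ ↦ two_mul_le_iff m
    _ ↔ ∀ j < i, (T.sort (· ≥ ·)).getD j d < (S.sort (· ≥ ·)).getD j d := by
      rw [← forall_getD_sort_le_iff subset_union_right (hT.trans hS.symm).le, hT]
      exact forall₂_congr fun j hj ↦ (lt_iff_le j hj).symm
    _ ↔ _ := ⟨fun h r _ _ ↦ h (r - 1) (by omega), fun h j hj ↦ h (j + 1) (by omega) hj⟩

lemma bijOn_dominatedPairs (A : Finset α) (d : α) (i : ℕ) :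
    Set.BijOn (fun q ↦ (⟨q.1 ∪ q.2, q.2⟩ : Σ _ : Finset α, Finset α)) (dominatedPairs A d i)
      ↑((A.powersetCard (2 * i)).sigma fun U ↦ ballotSubsets U i) := by
  refine ⟨?_, ?_, ?_⟩
  · rintro ⟨S, T⟩ ⟨hSA, hTA, hS, hT, hdisj, hlt⟩
    refine mem_sigma.2 ⟨mem_powersetCard.2 ⟨union_subset hSA hTA, ?_⟩,
      (mem_ballotSubsets_union_iff hdisj hS hT).2 hlt⟩
    rw [card_union_of_disjoint hdisj, hS, hT, two_mul]
  · rintro ⟨S, T⟩ ⟨_, _, _, _, hdisj, _⟩ ⟨S', T'⟩ ⟨_, _, _, _, hdisj', _⟩ h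
    obtain ⟨hunion, rfl⟩ : S ∪ T = S' ∪ T' ∧ T = T' := by simpa using h
    have hS : S = S' := calc
      S = (S ∪ T) \ T := (union_sdiff_cancel_right hdisj).symm
      _ = (S' ∪ T) \ T := by rw [hunion]
      _ = S' := union_sdiff_cancel_right hdisj'
    rw [hS]
  · rintro ⟨U, T⟩ hUT
    obtain ⟨hU, hT⟩ := mem_sigma.1 hUT
    obtain ⟨hUA, hUcard⟩ := mem_powersetCard.1 hU
    obtain ⟨⟨hTU, hTcard⟩, -⟩ := mem_ballotSubsets.1 hT
    have hScard : #(U \ T) = i := by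
      rw [card_sdiff_of_subset hTU, hUcard, hTcard, two_mul, Nat.add_sub_cancel]
    have hunion : U \ T ∪ T = U := sdiff_union_of_subset hTU
    refine ⟨(U \ T, T), ⟨sdiff_subset.trans hUA, hTU.trans hUA, hScard, hTcard, sdiff_disjoint,
      (mem_ballotSubsets_union_iff sdiff_disjoint hScard hTcard).1 (hunion.symm ▸ hT)⟩, ?_⟩
    simp only [hunion]

lemma ncard_dominatedPairs (A : Finset α) (d : α) (i : ℕ) :
    (dominatedPairs A d i).ncard = (#A).choose (2 * i) * catalan i := by
  rw [(bijOn_dominatedPairs A d i).ncard_eq, Set.ncard_coe_finset, card_sigma,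
    sum_const_nat fun U hU ↦ card_ballotSubsets_eq_catalan (mem_powersetCard.1 hU).2,
    card_powersetCard]

end Dominance

theorem count_dominated_pairs_general {α : Type*} [LinearOrder α] (A : Finset α) (d : α) (i : ℕ) :
    (i + 1) * (dominatedPairs A d i).ncard = (#A).choose (2 * i) * (2 * i).choose i ∧
      (i + 1) * (dominatedPairs A d i).ncard = (#A).choose i * (#A - i).choose i := by
  have hcount : (i + 1) * (dominatedPairs A d i).ncard =
      (#A).choose (2 * i) * (2 * i).choose i := by
    rw [ncard_dominatedPairs, mul_left_comm, succ_mul_catalan_eq_centralBinom,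
      Nat.centralBinom_eq_two_mul_choose]
  refine ⟨hcount, hcount.trans ?_⟩
  rw [Nat.choose_mul (by omega : i ≤ 2 * i), two_mul, Nat.add_sub_cancel]

/-- The number of pairs `(S,T)` of disjoint `i`-element subsets of `[n]` with
the `r`-th largest element of `T` smaller than the `r`-th largest element of
`S` for every `r` equals `C(n,2i)·(1/(i+1))·C(2i,i) = (1/(i+1))·C(n,i)·C(n-i,i)`. -/
theorem count_dominated_pairs (n : ℕ) (hn : 0 < n) (i : ℕ) (hi : i ≤ n / 2) :
    (i + 1) *
        {q : Finset ℕ × Finset ℕ |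
          q.1 ⊆ Finset.Icc 1 n ∧ q.2 ⊆ Finset.Icc 1 n ∧
          q.1.card = i ∧ q.2.card = i ∧ Disjoint q.1 q.2 ∧
          ∀ r, 1 ≤ r → r ≤ i →
            (q.2.sort (· ≥ ·)).getD (r - 1) 0 <
              (q.1.sort (· ≥ ·)).getD (r - 1) 0}.ncard =
        n.choose (2 * i) * (2 * i).choose i ∧
      (i + 1) *
        {q : Finset ℕ × Finset ℕ |
          q.1 ⊆ Finset.Icc 1 n ∧ q.2 ⊆ Finset.Icc 1 n ∧
          q.1.card = i ∧ q.2.card = i ∧ Disjoint q.1 q.2 ∧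
          ∀ r, 1 ≤ r → r ≤ i →
            (q.2.sort (· ≥ ·)).getD (r - 1) 0 <
              (q.1.sort (· ≥ ·)).getD (r - 1) 0}.ncard =
        n.choose i * (n - i).choose i := by
  simpa only [dominatedPairs, Nat.card_Icc, Nat.add_sub_cancel] using
    count_dominated_pairs_general (Icc 1 n) 0 i
end

section
/- Let σ = (r_1,...,r_k) be a composition of a positive integer n with partial sums s_i. The map sending (a_1,...,a_n) ∈ P_σ to the n-tuple (p_1,...,p_n) with p_i = a_1 + ... + a_i if a_i ≥ 1 and p_i = 0 if a_i = 0, is a bijection from P_σ onto H_σ, and it preserves the number of nonzero coordinates; consequently, for every 0 ≤ j ≤ n, h_j(σ) equals the number of elements of H_σ with exactly j nonzero entries. -/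
/-!
On a linear order whose initial segments are finite, let `p = supportSum a`. If `a` vanishes on
the whole of a finite initial segment `s`, then so does `p`; otherwise the last nonzero entry of `a`
in `s` sits at a position where `p` equals the full sum of `a` over `s`, which bounds all the other
entries of `p`. Hence sums of `a` over initial segments are the running maxima of `p`. This turns
the inequalities defining `P_σ` into those defining `H_σ`, and it shows that `a` is recovered from
`p` as the successive jumps of the running maximum, which gives the inverse map.
-/

open Finset Polynomial

/-- Membership in `H_σ`: the nonzero entries appear in strictly increasing order
from left to right, and `p₁, …, p_{s_i} ≤ s_i` for every `i ∈ [k]`. -/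
def memH (n : ℕ) (σ : List ℕ) (p : Fin n → ℕ) : Prop :=
  (∀ j j' : Fin n, j < j' → p j ≠ 0 → p j' ≠ 0 → p j < p j') ∧
  (∀ i, 1 ≤ i → i ≤ σ.length → ∀ j : Fin n, (j : ℕ) < pSum σ i → p j ≤ pSum σ i)

/-- `S(x)`: the set of (1-indexed) positions of the nonzero entries of `x`. -/
def Spos {n : ℕ} (p : Fin n → ℕ) : Finset ℕ :=
  (Finset.univ.filter (fun j : Fin n => p j ≠ 0)).image (fun j : Fin n => (j : ℕ) + 1)

/-- `T(x)`: the set of nonzero entries of `x`. -/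
def Tset {n : ℕ} (p : Fin n → ℕ) : Finset ℕ :=
  (Finset.univ.filter (fun j : Fin n => p j ≠ 0)).image p

/-- The map sending `(a₁, …, a_n)` to `(p₁, …, p_n)` with
`p_i = a₁ + ⋯ + a_i` if `a_i ≥ 1` and `p_i = 0` otherwise. -/
def phiMap (n : ℕ) (a : Fin n → ℕ) : Fin n → ℕ := fun j =>
  if a j = 0 then 0
  else ∑ t ∈ Finset.univ.filter (fun t : Fin n => (t : ℕ) ≤ (j : ℕ)), a t

section Preorder

variable {ι M : Type*} [Preorder ι] [LocallyFiniteOrderBot ι]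

/-- The partial sums of `a` at the positions where `a` is nonzero, and `0` elsewhere: the map
`phiMap` for an arbitrary index order. -/
def supportSum [AddCommMonoid M] [DecidableEq M] (a : ι → M) (j : ι) : M :=
  if a j = 0 then 0 else ∑ i ∈ Iic j, a i

/-- The jumps of the running maximum of `p`, used as the inverse of `supportSum`. At a position
where `p` does not exceed its earlier values the truncated subtraction gives `0`. -/
def recordGap [SemilatticeSup M] [OrderBot M] [Sub M] (p : ι → M) (j : ι) : M :=
  p j - (Iio j).sup p

variable [AddCommMonoid M] [DecidableEq M]

theorem supportSum_of_ne_zero {a : ι → M} {j : ι} (h : a j ≠ 0) :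
    supportSum a j = ∑ i ∈ Iic j, a i :=
  if_neg h

theorem supportSum_of_eq_zero {a : ι → M} {j : ι} (h : a j = 0) : supportSum a j = 0 :=
  if_pos h

theorem supportSum_eq_zero_iff [PartialOrder M] [CanonicallyOrderedAdd M]
    {a : ι → M} {j : ι} : supportSum a j = 0 ↔ a j = 0 := by
  refine ⟨fun h ↦ ?_, supportSum_of_eq_zero⟩
  by_contra ha
  rw [supportSum_of_ne_zero ha, sum_eq_zero_iff] at h
  exact ha (h j (mem_Iic.mpr le_rfl))

end Preorder

section LinearOrder

variable {ι M : Type*} [LinearOrder ι] [LocallyFiniteOrderBot ι]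

theorem lowerFinset_induction {P : Finset ι → Prop} (empty : P ∅)
    (step : ∀ j, P (Iio j) → P (Iic j)) (s : Finset ι) (hs : IsLowerSet (s : Set ι)) : P s := by
  induction s using Finset.induction_on_max with
  | empty => exact empty
  | insert m s hlt ih =>
    have hs_eq : s = Iio m := by
      ext x
      refine ⟨fun hx ↦ mem_Iio.mpr (hlt x hx), fun hx ↦ ?_⟩
      have hxm : x < m := mem_Iio.mp hx
      exact mem_of_mem_insert_of_ne (hs hxm.le (mem_insert_self m s)) hxm.ne
    subst hs_eq
    rw [Iio_insert]
    exact step m (ih (by simpa using isLowerSet_Iio m))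

variable [AddCommMonoid M] [LinearOrder M] [CanonicallyOrderedAdd M] [OrderBot M]

theorem sup_supportSum (a : ι → M) {s : Finset ι}
    (hs : IsLowerSet (s : Set ι)) : s.sup (supportSum a) = ∑ i ∈ s, a i := by
  refine lowerFinset_induction (P := fun s ↦ s.sup (supportSum a) = ∑ i ∈ s, a i)
    (by simp) (fun j ih ↦ ?_) s hs
  rw [← Iio_insert, sup_insert, ih, Iio_insert, ← add_sum_Iio_eq_sum_Iic]
  by_cases h : a j = 0
  · simp [supportSum_of_eq_zero h, h]
  · simp [supportSum_of_ne_zero h, ← add_sum_Iio_eq_sum_Iic]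

theorem sum_le_iff_forall_supportSum_le (a : ι → M) {s : Finset ι}
    (hs : IsLowerSet (s : Set ι)) {c : M} :
    ∑ i ∈ s, a i ≤ c ↔ ∀ i ∈ s, supportSum a i ≤ c := by
  rw [← sup_supportSum a hs, Finset.sup_le_iff]

theorem strictMonoOn_supportSum [IsCancelAdd M] (a : ι → M) :
    StrictMonoOn (supportSum a) (Function.support (supportSum a)) := by
  intro i _ j hj hij
  have ha : a j ≠ 0 := mt supportSum_eq_zero_iff.mpr hj
  calc
    supportSum a i ≤ (Iio j).sup (supportSum a) := le_sup (mem_Iio.mpr hij)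
    _ = ∑ k ∈ Iio j, a k := sup_supportSum a (by simpa using isLowerSet_Iio j)
    _ < a j + ∑ k ∈ Iio j, a k := lt_add_of_pos_left _ (pos_iff_ne_zero.mpr ha)
    _ = supportSum a j := by rw [supportSum_of_ne_zero ha, add_sum_Iio_eq_sum_Iic]

variable [Sub M] [OrderedSub M]

theorem sum_recordGap (p : ι → M) {s : Finset ι} (hs : IsLowerSet (s : Set ι)) :
    ∑ i ∈ s, recordGap p i = s.sup p := by
  refine lowerFinset_induction (P := fun s ↦ ∑ i ∈ s, recordGap p i = s.sup p)
    (by simp) (fun j ih ↦ ?_) s hs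
  rw [← add_sum_Iio_eq_sum_Iic, ih, recordGap, tsub_add_eq_max, ← Iio_insert, sup_insert]

theorem recordGap_supportSum [IsCancelAdd M] (a : ι → M) :
    recordGap (supportSum a) = a := by
  ext j
  rw [recordGap, sup_supportSum a (by simpa using isLowerSet_Iio j)]
  by_cases h : a j = 0
  · rw [supportSum_of_eq_zero h, zero_tsub, h]
  · rw [supportSum_of_ne_zero h, ← add_sum_Iio_eq_sum_Iic, add_tsub_cancel_right]

theorem supportSum_recordGap {p : ι → M} (hp : StrictMonoOn p (Function.support p)) :
    supportSum (recordGap p) = p := by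
  ext j
  by_cases h : p j = 0
  · rw [supportSum_of_eq_zero (by rw [recordGap, h, zero_tsub]), h]
  · have hsup : (Iio j).sup p < p j := by
      rw [Finset.sup_lt_iff (by simpa [bot_eq_zero] using pos_iff_ne_zero.mpr h)]
      intro i hi
      by_cases hpi : p i = 0
      · simpa [hpi] using pos_iff_ne_zero.mpr h
      · exact hp hpi h (mem_Iio.mp hi)
    have hgap : recordGap p j ≠ 0 := (tsub_pos_of_lt hsup).ne'
    rw [supportSum_of_ne_zero hgap, sum_recordGap p (by simpa using isLowerSet_Iic j),
      ← Iio_insert, sup_insert, sup_eq_left.mpr hsup.le]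

theorem bijOn_supportSum [IsCancelAdd M] :
    Set.BijOn supportSum (Set.univ : Set (ι → M)) {p | StrictMonoOn p (Function.support p)} :=
  Set.InvOn.bijOn (f' := recordGap)
    ⟨fun a _ ↦ recordGap_supportSum a, fun _ hp ↦ supportSum_recordGap hp⟩
    (fun a _ ↦ strictMonoOn_supportSum a) (Set.mapsTo_univ _ _)

end LinearOrder

theorem phiMap_eq_supportSum {n : ℕ} (a : Fin n → ℕ) : phiMap n a = supportSum a := by
  ext j
  have hIic : univ.filter (fun t : Fin n ↦ (t : ℕ) ≤ j) = Iic j := by ext; simp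
  rw [phiMap, supportSum, hIic]

theorem nonzeroCount_phiMap {n : ℕ} (a : Fin n → ℕ) :
    nonzeroCount (phiMap n a) = nonzeroCount a := by
  simp only [nonzeroCount, phiMap_eq_supportSum, ne_eq, supportSum_eq_zero_iff]

theorem strictMonoOn_support_of_memH {n : ℕ} {σ : List ℕ} {p : Fin n → ℕ} (hp : memH n σ p) :
    StrictMonoOn p (Function.support p) :=
  fun i hi j hj hij ↦ hp.1 i j hij hi hj

theorem isLowerSet_filter_val_lt {n : ℕ} (m : ℕ) :
    IsLowerSet ((univ.filter fun j : Fin n ↦ (j : ℕ) < m : Finset (Fin n)) : Set (Fin n)) := by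
  intro i j hji hi
  simp only [mem_coe, mem_filter, mem_univ, true_and] at hi ⊢
  exact (Fin.le_def.mp hji).trans_lt hi

theorem memH_phiMap_iff {n : ℕ} {σ : List ℕ} {a : Fin n → ℕ} :
    memH n σ (phiMap n a) ↔ memP n σ a := by
  have hincr : ∀ i j : Fin n, i < j → supportSum a i ≠ 0 → supportSum a j ≠ 0 →
      supportSum a i < supportSum a j :=
    fun _ _ hij hi hj ↦ strictMonoOn_supportSum a hi hj hij
  simp only [memH, memP, phiMap_eq_supportSum,
    sum_le_iff_forall_supportSum_le a (isLowerSet_filter_val_lt _), mem_filter, mem_univ,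
    true_and, and_iff_right hincr]

theorem bijOn_phiMap_of_subset_memH {n : ℕ} {σ : List ℕ} {t : Set (Fin n → ℕ)}
    (ht : t ⊆ {p | memH n σ p}) : Set.BijOn (phiMap n) (phiMap n ⁻¹' t) t := by
  have hphi : phiMap n = supportSum := funext phiMap_eq_supportSum
  rw [hphi]
  simpa using bijOn_supportSum.subset_right (ht.trans fun p hp ↦ strictMonoOn_support_of_memH hp)

theorem phiMap_bijOn_general (n : ℕ) (σ : List ℕ) :
    Set.BijOn (phiMap n) {a : Fin n → ℕ | memP n σ a} {p : Fin n → ℕ | memH n σ p} ∧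
      (∀ a : Fin n → ℕ, nonzeroCount (phiMap n a) = nonzeroCount a) ∧
      (∀ j, {a : Fin n → ℕ | memP n σ a ∧ nonzeroCount a = j}.encard =
        {p : Fin n → ℕ | memH n σ p ∧ nonzeroCount p = j}.encard) := by
  refine ⟨?_, nonzeroCount_phiMap, fun j ↦ ?_⟩
  · simpa only [Set.preimage_ofPred_eq, memH_phiMap_iff] using
      bijOn_phiMap_of_subset_memH (Set.Subset.refl {p | memH n σ p})
  · have hbij := bijOn_phiMap_of_subset_memH (n := n) (σ := σ)
      (t := {p | memH n σ p ∧ nonzeroCount p = j}) (fun p hp ↦ hp.1)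
    simp only [Set.preimage_ofPred_eq, memH_phiMap_iff, nonzeroCount_phiMap] at hbij
    exact Set.encard_congr hbij.equiv

/-- The map `phiMap` is a bijection from `P_σ` onto `H_σ` preserving the
number of nonzero coordinates; consequently `h_j(σ)` counts the elements of
`H_σ` with exactly `j` nonzero entries. -/
theorem phiMap_bijOn (n : ℕ) (hn : 0 < n) (σ : List ℕ)
    (hpos : ∀ r ∈ σ, 0 < r) (hsum : σ.sum = n) :
    Set.BijOn (phiMap n) {a : Fin n → ℕ | memP n σ a} {p : Fin n → ℕ | memH n σ p} ∧
      (∀ a : Fin n → ℕ, memP n σ a → nonzeroCount (phiMap n a) = nonzeroCount a) ∧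
      (∀ j ≤ n, hVec n σ j =
        {p : Fin n → ℕ | memH n σ p ∧ nonzeroCount p = j}.ncard) := by
  obtain ⟨hbij, hcount, hcard⟩ := phiMap_bijOn_general n σ
  exact ⟨hbij, fun a _ ↦ hcount a, fun j _ ↦ congrArg ENat.toNat (hcard j)⟩
end
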